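/- arXiv:1903.08742 — 4 statements merged into one kernel-verified Lean document; each statement's English description precedes it below -/
import Mathlib

section
/- For any positive integers s and d, there exists a real polynomial p of degree at most d such that sup_{x ∈ [−1,1]} |p(x) − x^s| ≤ 2·exp(−d²/(2s)). -/
/-!
Expand `x ^ s` in Chebyshev polynomials and drop the terms of degree above `d`. The coefficients
are nonnegative and `|Tₙ| ≤ 1` on `[-1, 1]`, so the error there is at most the sum of the dropped
coefficients. Evaluating the same expansion outside `[-1, 1]`, at `cosh t`, where
`Tₙ (cosh t) = cosh (n * t)`, bounds this sum by `cosh t ^ s / cosh (d * t)`, and the choice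
`t = d / s` gives the Gaussian tail.
-/

open Polynomial Finset

section ChebyshevSum

variable {ι R : Type*} [CommRing R]

/-- The linear combination `∑ i ∈ S, w i • Tₙᵢ` of Chebyshev polynomials of the first kind. The
indices `n i` may be negative or repeat, so that expansions can be stated without collecting
terms; restricting `S` truncates the expansion. -/
noncomputable def chebyshevSum (S : Finset ι) (w : ι → R) (n : ι → ℤ) : R[X] :=
  ∑ i ∈ S, w i • Chebyshev.T R (n i)

theorem eval_chebyshevSum (S : Finset ι) (w : ι → R) (n : ι → ℤ) (x : R) :
    (chebyshevSum S w n).eval x = ∑ i ∈ S, w i * (Chebyshev.T R (n i)).eval x := by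
  simp only [chebyshevSum, eval_finsetSum, eval_smul, smul_eq_mul]

theorem natDegree_chebyshevSum_le [IsDomain R] [NeZero (2 : R)] {S : Finset ι} (w : ι → R)
    {n : ι → ℤ} {d : ℕ} (hn : ∀ i ∈ S, (n i).natAbs ≤ d) :
    (chebyshevSum S w n).natDegree ≤ d :=
  natDegree_sum_le_of_forall_le S _ fun i hi =>
    (natDegree_smul_le _ _).trans ((Chebyshev.natDegree_T R (n i)).trans_le (hn i hi))

theorem chebyshevSum_filter_add_filter_not (S : Finset ι) (w : ι → R) (n : ι → ℤ)
    (P : ι → Prop) [DecidablePred P] :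
    chebyshevSum {i ∈ S | P i} w n + chebyshevSum {i ∈ S | ¬P i} w n = chebyshevSum S w n :=
  sum_filter_add_sum_filter_not S P _

theorem two_mul_X_pow_eq_sum_choose_nsmul_T (s : ℕ) :
    (2 * X : R[X]) ^ s =
      ∑ ij ∈ antidiagonal s, s.choose ij.1 • Chebyshev.T R ((ij.1 : ℤ) - ij.2) := by
  induction s with
  | zero => simp
  | succ s ih =>
    have two_mul_X_mul_T (m : ℤ) :
        2 * X * Chebyshev.T R m = Chebyshev.T R (m - 1) + Chebyshev.T R (m + 1) := by
      rw [Chebyshev.T_add_one]; ring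
    rw [sum_antidiagonal_choose_succ_nsmul (fun i j => Chebyshev.T R ((i : ℤ) - j)), pow_succ',
      ih, mul_sum, ← sum_add_distrib]
    refine sum_congr rfl fun ij hij => ?_
    rw [mul_smul_comm, two_mul_X_mul_T, smul_add,
      ← Nat.choose_symm_of_eq_add (mem_antidiagonal.mp hij).symm, Nat.cast_succ, Nat.cast_succ,
      sub_add_eq_sub_sub, add_sub_right_comm]

theorem X_pow_eq_chebyshevSum {K : Type*} [Field K] [NeZero (2 : K)] (s : ℕ) :
    (X : K[X]) ^ s =
      chebyshevSum (antidiagonal s) (fun ij => (s.choose ij.1 : K) / 2 ^ s)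
        (fun ij => (ij.1 : ℤ) - ij.2) := by
  have two_pow_ne_zero : (2 : K) ^ s ≠ 0 := pow_ne_zero s two_ne_zero
  have two_pow_smul_X_pow : (2 : K) ^ s • (X : K[X]) ^ s = (2 * X) ^ s := by
    rw [mul_pow, smul_eq_C_mul, C_pow, C_ofNat]
  rw [← inv_smul_smul₀ two_pow_ne_zero (X ^ s), two_pow_smul_X_pow,
    two_mul_X_pow_eq_sum_choose_nsmul_T, smul_sum, chebyshevSum]
  refine sum_congr rfl fun ij _ => ?_
  rw [← Nat.cast_smul_eq_nsmul K, smul_smul, div_eq_inv_mul]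

end ChebyshevSum

section TruncationError

variable {ι : Type*} {S : Finset ι} {w : ι → ℝ}

theorem abs_eval_chebyshevSum_le_sum (hw : ∀ i ∈ S, 0 ≤ w i) (n : ι → ℤ) {x : ℝ} (hx : |x| ≤ 1) :
    |(chebyshevSum S w n).eval x| ≤ ∑ i ∈ S, w i := by
  rw [eval_chebyshevSum]
  refine (abs_sum_le_sum_abs _ _).trans (sum_le_sum fun i hi => ?_)
  rw [abs_mul, abs_of_nonneg (hw i hi)]
  exact mul_le_of_le_one_right (hw i hi) (Chebyshev.abs_eval_T_real_le_one (n i) hx)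

theorem sum_filter_lt_natAbs_le_eval_cosh_div (hw : ∀ i ∈ S, 0 ≤ w i) (n : ι → ℤ) (d : ℕ)
    (t : ℝ) :
    ∑ i ∈ S with d < (n i).natAbs, w i ≤
      (chebyshevSum S w n).eval (Real.cosh t) / Real.cosh (d * t) := by
  have cosh_le_cosh {m : ℤ} (hm : d < m.natAbs) : Real.cosh (d * t) ≤ Real.cosh (m * t) := by
    have : (d : ℝ) ≤ |(m : ℝ)| := by
      rw [← Int.cast_abs, ← Nat.cast_natAbs]; exact_mod_cast hm.le
    rw [Real.cosh_le_cosh, abs_mul, abs_mul, Nat.abs_cast]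
    gcongr
  simp only [le_div_iff₀ (Real.cosh_pos _), eval_chebyshevSum, Chebyshev.T_real_cosh]
  calc (∑ i ∈ S with d < (n i).natAbs, w i) * Real.cosh (d * t)
      = ∑ i ∈ S with d < (n i).natAbs, w i * Real.cosh (d * t) := sum_mul _ _ _
    _ ≤ ∑ i ∈ S with d < (n i).natAbs, w i * Real.cosh (n i * t) :=
        sum_le_sum fun i hi => mul_le_mul_of_nonneg_left (cosh_le_cosh (mem_filter.mp hi).2)
          (hw i (mem_filter.mp hi).1)
    _ ≤ ∑ i ∈ S, w i * Real.cosh (n i * t) :=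
        sum_le_sum_of_subset_of_nonneg (filter_subset _ _) fun i hi _ =>
          mul_nonneg (hw i hi) (Real.cosh_pos _).le

theorem abs_eval_chebyshevSum_filter_sub_le (hw : ∀ i ∈ S, 0 ≤ w i) (n : ι → ℤ) (d : ℕ) (t : ℝ)
    {x : ℝ} (hx : |x| ≤ 1) :
    |(chebyshevSum {i ∈ S | (n i).natAbs ≤ d} w n).eval x - (chebyshevSum S w n).eval x| ≤
      (chebyshevSum S w n).eval (Real.cosh t) / Real.cosh (d * t) := by
  have truncation_add_remainder := congrArg (eval x)
    (chebyshevSum_filter_add_filter_not S w n fun i => (n i).natAbs ≤ d)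
  simp only [eval_add, not_le] at truncation_add_remainder
  rw [abs_sub_comm, ← truncation_add_remainder, add_sub_cancel_left]
  exact (abs_eval_chebyshevSum_le_sum (fun i hi => hw i (mem_filter.mp hi).1) n hx).trans
    (sum_filter_lt_natAbs_le_eval_cosh_div hw n d t)

end TruncationError

theorem cosh_pow_div_cosh_le (s : ℕ) (t u : ℝ) :
    Real.cosh t ^ s / Real.cosh u ≤ 2 * Real.exp (s * (t ^ 2 / 2) - u) := by
  have exp_le_two_mul_cosh : Real.exp u ≤ 2 * Real.cosh u := by
    rw [Real.cosh_eq]; linarith [Real.exp_pos (-u)]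
  have cosh_pow_le : Real.cosh t ^ s ≤ Real.exp (s * (t ^ 2 / 2)) := by
    rw [Real.exp_nat_mul]
    exact pow_le_pow_left₀ (Real.cosh_pos t).le (Real.cosh_le_exp_half_sq t) s
  rw [div_le_iff₀ (Real.cosh_pos u)]
  calc Real.cosh t ^ s ≤ Real.exp (s * (t ^ 2 / 2) - u) * Real.exp u := by
        rwa [← Real.exp_add, sub_add_cancel]
    _ ≤ Real.exp (s * (t ^ 2 / 2) - u) * (2 * Real.cosh u) := by gcongr
    _ = 2 * Real.exp (s * (t ^ 2 / 2) - u) * Real.cosh u := by ring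

/-- **Proposition 2 (polynomial approximation of the monomial).**
For any positive integers `s` and `d`, there exists a real polynomial `p` of degree at
most `d` such that `sup_{x ∈ [−1,1]} |p(x) − x^s| ≤ 2 · exp(−d²/(2s))`. -/
theorem monomial_approx_by_low_degree_polynomial (s d : ℕ) (hs : 0 < s) (hd : 0 < d) :
    ∃ p : Polynomial ℝ, p.natDegree ≤ d ∧
      ∀ x ∈ Set.Icc (-1 : ℝ) 1,
        |p.eval x - x ^ s| ≤ 2 * Real.exp (-(d : ℝ) ^ 2 / (2 * s)) := by
  set w : ℕ × ℕ → ℝ := fun ij => (s.choose ij.1 : ℝ) / 2 ^ s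
  set n : ℕ × ℕ → ℤ := fun ij => (ij.1 : ℤ) - ij.2
  have eval_expansion (y : ℝ) : (chebyshevSum (antidiagonal s) w n).eval y = y ^ s := by
    rw [← X_pow_eq_chebyshevSum, eval_pow, eval_X]
  refine ⟨chebyshevSum {ij ∈ antidiagonal s | (n ij).natAbs ≤ d} w n,
    natDegree_chebyshevSum_le w fun ij hij => (mem_filter.mp hij).2, fun x hx => ?_⟩
  have truncation_error := abs_eval_chebyshevSum_filter_sub_le (S := antidiagonal s) (w := w)
    (fun _ _ => by positivity) n d (d / s) (abs_le.mpr hx)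
  rw [eval_expansion, eval_expansion] at truncation_error
  calc _ ≤ Real.cosh (d / s) ^ s / Real.cosh (d * (d / s)) := truncation_error
    _ ≤ 2 * Real.exp (s * ((d / s) ^ 2 / 2) - d * (d / s)) := cosh_pow_div_cosh_le s _ _
    _ = 2 * Real.exp (-(d : ℝ) ^ 2 / (2 * s)) := by
        congr 2
        field_simp
        ring
end

section
/- Let B be a real symmetric positive definite d×d matrix, A a real symmetric d×d matrix, β ∈ ℝ, and w₀ ∈ ℝ^d with ‖w₀‖_B = 1. Define the unnormalized sequence x₋₁ = 0, x₀ = w₀, x_{t+1} = B^{−1}A x_t − β x_{t−1} for t ≥ 0. Define the normalized sequence w₋₁ = 0, γ₀ = 1, and for t ≥ 0: γ_{t+1} = ‖B^{−1}A w_t − β γ_t^{−1} w_{t−1}‖_B and, assuming γ_{t+1} > 0, w_{t+1} = (B^{−1}A w_t − β γ_t^{−1} w_{t−1}) / γ_{t+1}. Then for every t ≥ 0 one has w_t = x_t / (γ₀ γ₁ ⋯ γ_t); in particular ‖x_t‖_B = γ₀ γ₁ ⋯ γ_t and w_t = x_t / ‖x_t‖_B. -/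
open Matrix Finset

/-- The `B`-norm `‖x‖_B = √(xᵀ B x)` of a vector. -/
noncomputable def Bnorm {d : ℕ} (B : Matrix (Fin d) (Fin d) ℝ) (x : Fin d → ℝ) : ℝ :=
  Real.sqrt (x ⬝ᵥ (B *ᵥ x))

/-!
Dividing the unnormalized iterate `x_t` by `γ₀ ⋯ γ_t` turns its recurrence into the normalized
one, whatever the scalars `γ` are, so `w_t = x_t / (γ₀ ⋯ γ_t)`. The choice of `γ_{t+1}` as the norm
of `B⁻¹A w_t − β γ_t⁻¹ w_{t−1} = x_{t+1} / (γ₀ ⋯ γ_t)` then gives `‖x_{t+1}‖ = γ₀ ⋯ γ_{t+1}`.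
-/

section Rescaling

variable {K E : Type*} [Field K] [AddCommGroup E] [Module K E]
  {T : E →ₗ[K] E} {β : K} {x w : ℕ → E} {γ : ℕ → K}

theorem map_inv_prod_smul_sub_smul
    (hx : ∀ t, x (t + 2) = T (x (t + 1)) - β • x t) (t : ℕ) :
    T ((∏ i ∈ range (t + 1), γ i)⁻¹ • x (t + 1))
        - (β * (γ t)⁻¹) • (∏ i ∈ range t, γ i)⁻¹ • x t
      = (∏ i ∈ range (t + 1), γ i)⁻¹ • x (t + 2) := by
  have hcoeff : β * (γ t)⁻¹ * (∏ i ∈ range t, γ i)⁻¹ = (∏ i ∈ range (t + 1), γ i)⁻¹ * β := by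
    rw [prod_range_succ, mul_inv]
    ring
  rw [map_smul, smul_smul, hcoeff, mul_smul, ← smul_sub, hx]

theorem eq_inv_prod_smul_of_normalized_recurrence
    (hx : ∀ t, x (t + 2) = T (x (t + 1)) - β • x t)
    (hw : ∀ t, w (t + 2) = (γ (t + 1))⁻¹ • (T (w (t + 1)) - (β * (γ t)⁻¹) • w t))
    (hw0 : w 0 = x 0) (hw1 : w 1 = (γ 0)⁻¹ • x 1) (t : ℕ) :
    w t = (∏ i ∈ range t, γ i)⁻¹ • x t := by
  induction t using Nat.twoStepInduction with
  | zero => simpa using hw0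
  | one => simpa using hw1
  | more t ih ih_succ =>
    rw [hw, ih, ih_succ, map_inv_prod_smul_sub_smul hx, smul_smul, ← _root_.mul_inv_rev,
      ← prod_range_succ]

end Rescaling

theorem eq_mul_apply_inv_smul_of_posHomogeneous {K E : Type*} [Field K] [Preorder K]
    [MulAction K E] {N : E → K} (hN : ∀ c, 0 < c → ∀ v, N (c • v) = c * N v)
    {c : K} (hc : 0 < c) (v : E) : N v = c * N (c⁻¹ • v) := by
  rw [← hN c hc, smul_inv_smul₀ hc.ne']

theorem normalized_iterates_eq_unnormalized_general
    {K E : Type*} [Field K] [LinearOrder K] [IsStrictOrderedRing K] [AddCommGroup E] [Module K E]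
    (T : E →ₗ[K] E) (N : E → K) (hN : ∀ c, 0 < c → ∀ v, N (c • v) = c * N v) (β : K)
    (x w : ℕ → E) (γ : ℕ → K)
    (hx : ∀ t, x (t + 2) = T (x (t + 1)) - β • x t)
    (hw0 : w 0 = x 0) (hw1 : w 1 = (γ 0)⁻¹ • x 1) (hγ0 : γ 0 = N (x 1))
    (hγ : ∀ t, γ (t + 1) = N (T (w (t + 1)) - (β * (γ t)⁻¹) • w t))
    (hγpos : ∀ t, 0 < γ t)
    (hw : ∀ t, w (t + 2) = (γ (t + 1))⁻¹ • (T (w (t + 1)) - (β * (γ t)⁻¹) • w t)) (t : ℕ) :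
    w (t + 1) = (∏ i ∈ range (t + 1), γ i)⁻¹ • x (t + 1) ∧
      N (x (t + 1)) = ∏ i ∈ range (t + 1), γ i ∧
      w (t + 1) = (N (x (t + 1)))⁻¹ • x (t + 1) := by
  have hw_eq : ∀ t, w t = (∏ i ∈ range t, γ i)⁻¹ • x t :=
    eq_inv_prod_smul_of_normalized_recurrence hx hw hw0 hw1
  have hγ_eq : ∀ t, γ t = N ((∏ i ∈ range t, γ i)⁻¹ • x (t + 1)) := by
    rintro (_ | t)
    · simpa using hγ0
    · rw [hγ, hw_eq, hw_eq, map_inv_prod_smul_sub_smul hx]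
  have hnorm : N (x (t + 1)) = ∏ i ∈ range (t + 1), γ i := by
    rw [prod_range_succ, hγ_eq t]
    exact eq_mul_apply_inv_smul_of_posHomogeneous hN (prod_pos fun i _ => hγpos i) _
  exact ⟨hw_eq (t + 1), hnorm, hnorm ▸ hw_eq (t + 1)⟩

theorem Bnorm_smul {d : ℕ} (B : Matrix (Fin d) (Fin d) ℝ) (c : ℝ) (v : Fin d → ℝ) :
    Bnorm B (c • v) = |c| * Bnorm B v := by
  have hquad : (c • v) ⬝ᵥ (B *ᵥ (c • v)) = c ^ 2 * (v ⬝ᵥ (B *ᵥ v)) := by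
    rw [mulVec_smul, smul_dotProduct, dotProduct_smul, smul_smul, smul_eq_mul, sq]
  rw [Bnorm, Bnorm, hquad, Real.sqrt_mul (sq_nonneg c), Real.sqrt_sq_eq_abs]

/-- **Equivalence of the normalized and unnormalized accelerated power iterations.**
Let `B` be real symmetric positive definite, `A` real symmetric, `β ∈ ℝ`, and
`‖w₀‖_B = 1`.  The sequences are indexed with an offset of one, so that `x (t+1)`
stands for the paper's `x_t` and `x 0` for `x_{−1}`; likewise for `w`.  The
unnormalized sequence is `x_{−1} = 0`, `x_0 = w₀`, `x_{t+1} = B⁻¹A x_t − β x_{t−1}`.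
The normalized sequence is `w_{−1} = 0`, `γ_0 = 1`, and for `t ≥ 0`,
`γ_{t+1} = ‖B⁻¹A w_t − β γ_t⁻¹ w_{t−1}‖_B > 0` with
`w_{t+1} = (B⁻¹A w_t − β γ_t⁻¹ w_{t−1}) / γ_{t+1}`.  Then for every `t ≥ 0`,
`w_t = x_t / (γ_0 γ_1 ⋯ γ_t)`; in particular `‖x_t‖_B = γ_0 γ_1 ⋯ γ_t` and
`w_t = x_t / ‖x_t‖_B`. -/
theorem normalized_iterates_eq_unnormalized
    {d : ℕ} (B A : Matrix (Fin d) (Fin d) ℝ)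
    (hB : B.PosDef) (hBsym : B.IsSymm) (hA : A.IsSymm) (β : ℝ)
    (w₀ : Fin d → ℝ) (hw₀ : Bnorm B w₀ = 1)
    (x w : ℕ → Fin d → ℝ) (γ : ℕ → ℝ)
    (hx0 : x 0 = 0) (hx1 : x 1 = w₀)
    (hxrec : ∀ t : ℕ, x (t + 2) = (B⁻¹ * A) *ᵥ x (t + 1) - β • x t)
    (hw0 : w 0 = 0) (hw1 : w 1 = w₀) (hγ0 : γ 0 = 1)
    (hγ : ∀ t : ℕ,
      γ (t + 1) = Bnorm B ((B⁻¹ * A) *ᵥ w (t + 1) - (β * (γ t)⁻¹) • w t))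
    (hγpos : ∀ t : ℕ, 0 < γ (t + 1))
    (hwrec : ∀ t : ℕ,
      w (t + 2) = (γ (t + 1))⁻¹ • ((B⁻¹ * A) *ᵥ w (t + 1) - (β * (γ t)⁻¹) • w t)) :
    ∀ t : ℕ,
      w (t + 1) = (∏ i ∈ Finset.range (t + 1), γ i)⁻¹ • x (t + 1) ∧
      Bnorm B (x (t + 1)) = ∏ i ∈ Finset.range (t + 1), γ i ∧
      w (t + 1) = (Bnorm B (x (t + 1)))⁻¹ • x (t + 1) := by
  exact normalized_iterates_eq_unnormalized_general (B⁻¹ * A).mulVecLin (Bnorm B)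
    (fun c hc v => by rw [Bnorm_smul, abs_of_pos hc]) β x w γ hxrec (hw0.trans hx0.symm)
    (by rw [hw1, hx1, hγ0, inv_one, one_smul]) (by rw [hγ0, hx1, hw₀]) hγ
    (Nat.rec (hγ0 ▸ one_pos) fun t _ => hγpos t) hwrec
end

section
/- Let λ₁, λ₂ be real numbers with |λ₁| > |λ₂| ≥ 0, let Δ = 1 − |λ₂|/|λ₁|, and let β = λ₂²/4. Then 1 − 2√β/(|λ₁| + √(λ₁² − 4β)) = 2√Δ·√|λ₁| / ( √(|λ₁| + |λ₂|) + √(|λ₁| − |λ₂|) ), and this quantity is at least √Δ/√2. -/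
/-!
Write `a = |λ₁|`, `b = |λ₂|` and `p = √(a + b)`, `q = √(a - b)`. Then `p ^ 2 - q ^ 2 = 2 * b` and
`(p + q) ^ 2 = 2 * (a + √(a ^ 2 - b ^ 2))`, so the gap is `1 - (p - q) / (p + q) = 2 * q / (p + q)`,
where `q = √Δ * √a`. The same square gives `p + q ≤ 2 * √a`, so the gap is at least `√Δ`, which
improves the stated bound by a factor `√2`.
-/

section

variable {a b : ℝ}

theorem sqrt_add_add_sqrt_sub_sq (h : |b| ≤ a) :
    (√(a + b) + √(a - b)) ^ 2 = 2 * (a + √(a ^ 2 - b ^ 2)) := by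
  obtain ⟨hneg, hle⟩ := abs_le.mp h
  have hadd : 0 ≤ a + b := by linarith
  have hsub : 0 ≤ a - b := by linarith
  rw [add_sq, Real.sq_sqrt hadd, Real.sq_sqrt hsub, sq_sub_sq, Real.sqrt_mul hadd]
  ring

theorem sqrt_add_add_sqrt_sub_le (h : |b| ≤ a) : √(a + b) + √(a - b) ≤ 2 * √a := by
  have ha : 0 ≤ a := (abs_nonneg b).trans h
  have hsqrt : √(a ^ 2 - b ^ 2) ≤ a :=
    Real.sqrt_le_iff.mpr ⟨ha, sub_le_self _ (sq_nonneg b)⟩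
  refine le_of_sq_le_sq ?_ (by positivity)
  calc (√(a + b) + √(a - b)) ^ 2 = 2 * (a + √(a ^ 2 - b ^ 2)) := sqrt_add_add_sqrt_sub_sq h
    _ ≤ 4 * a := by linarith
    _ = (2 * √a) ^ 2 := by rw [mul_pow, Real.sq_sqrt ha]; norm_num

theorem sqrt_add_add_sqrt_sub_pos (ha : 0 < a) : 0 < √(a + b) + √(a - b) := by
  rcases le_total 0 b with hb | hb
  · exact add_pos_of_pos_of_nonneg (Real.sqrt_pos.mpr (by linarith)) (Real.sqrt_nonneg _)
  · exact add_pos_of_nonneg_of_pos (Real.sqrt_nonneg _) (Real.sqrt_pos.mpr (by linarith))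

theorem one_sub_div_add_sqrt_sq_sub_sq (ha : 0 < a) (h : |b| ≤ a) :
    1 - b / (a + √(a ^ 2 - b ^ 2)) = 2 * √(a - b) / (√(a + b) + √(a - b)) := by
  obtain ⟨hneg, hle⟩ := abs_le.mp h
  have hsum : √(a + b) + √(a - b) ≠ 0 := (sqrt_add_add_sqrt_sub_pos ha).ne'
  have hden : a + √(a ^ 2 - b ^ 2) = (√(a + b) + √(a - b)) ^ 2 / 2 := by
    rw [sqrt_add_add_sqrt_sub_sq h]; ring
  have hnum : b = (√(a + b) + √(a - b)) * (√(a + b) - √(a - b)) / 2 := by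
    rw [← sq_sub_sq, Real.sq_sqrt (by linarith), Real.sq_sqrt (by linarith)]; ring
  calc 1 - b / (a + √(a ^ 2 - b ^ 2))
      = 1 - (√(a + b) + √(a - b)) * (√(a + b) - √(a - b)) / 2 /
          ((√(a + b) + √(a - b)) ^ 2 / 2) := by rw [← hnum, hden]
    _ = 2 * √(a - b) / (√(a + b) + √(a - b)) := by field_simp; ring

theorem sqrt_one_sub_div_mul_sqrt (ha : 0 < a) : √(1 - b / a) * √a = √(a - b) := by
  rw [← Real.sqrt_mul' _ ha.le, sub_mul, one_mul, div_mul_cancel₀ b ha.ne']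

theorem one_le_two_mul_sqrt_div_sqrt_add_add_sqrt_sub (ha : 0 < a) (h : |b| ≤ a) :
    1 ≤ 2 * √a / (√(a + b) + √(a - b)) :=
  (one_le_div (sqrt_add_add_sqrt_sub_pos ha)).mpr (sqrt_add_add_sqrt_sub_le h)

end

theorem two_mul_sqrt_sq_div_four (x : ℝ) : 2 * √(x ^ 2 / 4) = |x| := by
  rw [show x ^ 2 / 4 = (x / 2) ^ 2 by ring, Real.sqrt_sq_eq_abs, abs_div, abs_two]
  ring

theorem extended_gap_formula_general (lam₁ lam₂ : ℝ) (h₁ : lam₁ ≠ 0) (h : |lam₂| ≤ |lam₁|) :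
    1 - 2 * √(lam₂ ^ 2 / 4) / (|lam₁| + √(lam₁ ^ 2 - 4 * (lam₂ ^ 2 / 4))) =
      2 * √(1 - |lam₂| / |lam₁|) * √|lam₁| / (√(|lam₁| + |lam₂|) + √(|lam₁| - |lam₂|)) ∧
    √(1 - |lam₂| / |lam₁|) ≤
      2 * √(1 - |lam₂| / |lam₁|) * √|lam₁| / (√(|lam₁| + |lam₂|) + √(|lam₁| - |lam₂|)) := by
  have hpos : 0 < |lam₁| := abs_pos.mpr h₁
  have habs : |(|lam₂|)| ≤ |lam₁| := (abs_abs lam₂).trans_le h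
  constructor
  · have hdisc : lam₁ ^ 2 - 4 * (lam₂ ^ 2 / 4) = |lam₁| ^ 2 - |lam₂| ^ 2 := by
      rw [sq_abs, sq_abs]; ring
    rw [two_mul_sqrt_sq_div_four, hdisc, one_sub_div_add_sqrt_sq_sub_sq hpos habs, mul_assoc 2,
      sqrt_one_sub_div_mul_sqrt hpos]
  · calc √(1 - |lam₂| / |lam₁|)
        ≤ √(1 - |lam₂| / |lam₁|) * (2 * √|lam₁| / (√(|lam₁| + |lam₂|) + √(|lam₁| - |lam₂|))) :=
          le_mul_of_one_le_right (Real.sqrt_nonneg _)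
            (one_le_two_mul_sqrt_div_sqrt_add_add_sqrt_sub hpos habs)
      _ = _ := by ring

/-- **Eigenvalue-gap computation (proof of Theorem 1).**
Let `|λ₁| > |λ₂| ≥ 0`, `Δ = 1 − |λ₂|/|λ₁|` and `β = λ₂²/4`.  Then
`1 − 2√β/(|λ₁| + √(λ₁² − 4β)) = 2√Δ√|λ₁|/(√(|λ₁|+|λ₂|) + √(|λ₁|−|λ₂|))`,
and this quantity is at least `√Δ/√2`. -/
theorem extended_gap_formula (lam₁ lam₂ : ℝ) (h : |lam₂| < |lam₁|) :
    1 - 2 * Real.sqrt (lam₂ ^ 2 / 4) /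
        (|lam₁| + Real.sqrt (lam₁ ^ 2 - 4 * (lam₂ ^ 2 / 4))) =
      2 * Real.sqrt (1 - |lam₂| / |lam₁|) * Real.sqrt |lam₁| /
        (Real.sqrt (|lam₁| + |lam₂|) + Real.sqrt (|lam₁| - |lam₂|)) ∧
    Real.sqrt (1 - |lam₂| / |lam₁|) / Real.sqrt 2 ≤
      2 * Real.sqrt (1 - |lam₂| / |lam₁|) * Real.sqrt |lam₁| /
        (Real.sqrt (|lam₁| + |lam₂|) + Real.sqrt (|lam₁| - |lam₂|)) := by
  have hgap := extended_gap_formula_general lam₁ lam₂ (abs_pos.mp ((abs_nonneg _).trans_lt h)) h.le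
  exact hgap.imp_right (div_le_self (Real.sqrt_nonneg _) (Real.one_le_sqrt.mpr one_le_two)).trans
end

section
/- Let B be a real symmetric positive definite d×d matrix and 1 ≤ k ≤ d. Let X, Y ∈ ℝ^{d×k} satisfy XᵀBX = YᵀBY = I_k. Then min over orthogonal k×k matrices Q (QᵀQ = I_k) of the spectral norm ‖B^{1/2}X − B^{1/2}YQ‖ is at most √(2 − 2·σ_min(XᵀBY)), where σ_min denotes the smallest singular value of the k×k matrix XᵀBY. -/
open Matrix

/-- The spectral norm (largest singular value) of a real rectangular matrix,
realized as the operator norm of the induced map between Euclidean spaces. -/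
noncomputable def specNorm {m n : Type*} [Fintype m] [Fintype n] [DecidableEq n]
    (M : Matrix m n ℝ) : ℝ :=
  ‖LinearMap.toContinuousLinearMap (Matrix.toEuclideanLin M)‖

/-- The smallest singular value of a square real matrix, realized as the infimum of
`‖Mx‖` over unit vectors `x` of the Euclidean space. -/
noncomputable def sminNorm {k : ℕ} (M : Matrix (Fin k) (Fin k) ℝ) : ℝ :=
  sInf {r : ℝ | ∃ x : EuclideanSpace ℝ (Fin k), ‖x‖ = 1 ∧ r = ‖Matrix.toEuclideanLin M x‖}

/-!
Put `U = SX` and `V = SY`, whose columns are orthonormal, so that `UᵀV = XᵀBY`. For orthogonal `Q`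
and a vector `v`,
  `‖Uv - VQv‖² = 2‖v‖² - 2⟪v, (UᵀV)Qv⟫`,
so the task is to rotate `UᵀV` into a matrix whose quadratic form is as large as possible. If
`UᵀV = ∑ sᵢ uᵢ bᵢᵀ` is a singular value decomposition, the orthogonal `Q` with `Q uᵢ = bᵢ` makes
`(UᵀV)Q = ∑ sᵢ uᵢ uᵢᵀ` positive semidefinite with quadratic form at least `σ_min ‖v‖²`.
-/

open Module (finrank)
open scoped InnerProductSpace

section InnerProductSpace

variable {𝕜 E F G ι : Type*} [RCLike 𝕜]
  [NormedAddCommGroup E] [InnerProductSpace 𝕜 E]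
  [NormedAddCommGroup F] [InnerProductSpace 𝕜 F]
  [NormedAddCommGroup G] [InnerProductSpace 𝕜 G]

theorem re_inner_map_self_eq_sum [Fintype ι] (u : OrthonormalBasis ι 𝕜 F) {A : F →ₗ[𝕜] F}
    {s : ι → ℝ} (hA : ∀ i, A (u i) = (s i : 𝕜) • u i) (x : F) :
    RCLike.re ⟪x, A x⟫_𝕜 = ∑ i, s i * ‖⟪u i, x⟫_𝕜‖ ^ 2 := by
  have hAx : A x = ∑ i, (⟪u i, x⟫_𝕜 * s i) • u i := by
    conv_lhs => rw [← u.sum_repr' x]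
    simp only [map_sum, map_smul, hA, smul_smul]
  rw [hAx, inner_sum, map_sum]
  refine Finset.sum_congr rfl fun i _ ↦ ?_
  rw [inner_smul_right, mul_right_comm, RCLike.re_mul_ofReal, inner_mul_symm_re_eq_norm,
    norm_mul, norm_inner_symm x, ← sq, mul_comm]

variable [FiniteDimensional 𝕜 E] [FiniteDimensional 𝕜 F]

theorem exists_orthonormalBasis_pairwise_inner_map_eq_zero (T : E →ₗ[𝕜] F) :
    ∃ b : OrthonormalBasis (Fin (finrank 𝕜 E)) 𝕜 E,
      Pairwise fun i j ↦ ⟪T (b i), T (b j)⟫_𝕜 = 0 := by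
  have hsymm := T.isSymmetric_adjoint_comp_self
  refine ⟨hsymm.eigenvectorBasis rfl, fun i j hij ↦ ?_⟩
  beta_reduce
  rw [← LinearMap.adjoint_inner_right, ← LinearMap.comp_apply, hsymm.apply_eigenvectorBasis,
    inner_smul_right, OrthonormalBasis.inner_eq_zero _ hij, mul_zero]

theorem exists_orthonormalBasis_eq_norm_smul [Fintype ι] (hι : finrank 𝕜 F = Fintype.card ι)
    {v : ι → F} (hv : Pairwise fun i j ↦ ⟪v i, v j⟫_𝕜 = 0) :
    ∃ u : OrthonormalBasis ι 𝕜 F, ∀ i, v i = (‖v i‖ : 𝕜) • u i := by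
  have hortho : Orthonormal 𝕜 ({i | v i ≠ 0}.domRestrict fun i ↦ (‖v i‖⁻¹ : 𝕜) • v i) := by
    refine ⟨fun i ↦ norm_smul_inv_norm i.2, fun i j hij ↦ ?_⟩
    simp [inner_smul_left, inner_smul_right, hv (Subtype.coe_injective.ne hij)]
  obtain ⟨u, hu⟩ := hortho.exists_orthonormalBasis_extension_of_card_eq hι
  refine ⟨u, fun i ↦ ?_⟩
  by_cases hi : v i = 0
  · simp [hi]
  · rw [hu i hi, smul_inv_smul₀ (by simpa using hi)]

theorem exists_orthonormalBasis_map_eq_norm_smul (h : finrank 𝕜 E = finrank 𝕜 F) (T : E →ₗ[𝕜] F) :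
    ∃ (b : OrthonormalBasis (Fin (finrank 𝕜 E)) 𝕜 E)
      (u : OrthonormalBasis (Fin (finrank 𝕜 E)) 𝕜 F), ∀ i, T (b i) = (‖T (b i)‖ : 𝕜) • u i := by
  obtain ⟨b, hb⟩ := exists_orthonormalBasis_pairwise_inner_map_eq_zero T
  exact ⟨b, exists_orthonormalBasis_eq_norm_smul (by simp [h]) hb⟩

theorem exists_linearIsometryEquiv_mul_norm_sq_le_re_inner (h : finrank 𝕜 E = finrank 𝕜 F)
    {T : E →ₗ[𝕜] F} {σ : ℝ} (hσ : ∀ x, σ * ‖x‖ ≤ ‖T x‖) :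
    ∃ e : F ≃ₗᵢ[𝕜] E, ∀ y, σ * ‖y‖ ^ 2 ≤ RCLike.re ⟪y, T (e y)⟫_𝕜 := by
  obtain ⟨b, u, hT⟩ := exists_orthonormalBasis_map_eq_norm_smul h T
  let e : F ≃ₗᵢ[𝕜] E := u.equiv b (Equiv.refl _)
  have hdiag (i) : (T ∘ₗ e.toLinearMap) (u i) = (‖T (b i)‖ : 𝕜) • u i := by
    simpa [e] using hT i
  refine ⟨e, fun y ↦ ?_⟩
  calc σ * ‖y‖ ^ 2 = ∑ i, σ * ‖⟪u i, y⟫_𝕜‖ ^ 2 := by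
        rw [← u.sum_sq_norm_inner_right y, Finset.mul_sum]
    _ ≤ ∑ i, ‖T (b i)‖ * ‖⟪u i, y⟫_𝕜‖ ^ 2 := by
        gcongr with i
        simpa using hσ (b i)
    _ = RCLike.re ⟪y, T (e y)⟫_𝕜 := (re_inner_map_self_eq_sum u hdiag y).symm

theorem exists_linearIsometryEquiv_norm_sub_le (h : finrank 𝕜 E = finrank 𝕜 F)
    {U : F →ₗᵢ[𝕜] G} {V : E →ₗᵢ[𝕜] G} {T : E →ₗ[𝕜] F} (hT : ∀ x y, ⟪U x, V y⟫_𝕜 = ⟪x, T y⟫_𝕜)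
    {σ : ℝ} (hσ : ∀ y, σ * ‖y‖ ≤ ‖T y‖) :
    ∃ e : F ≃ₗᵢ[𝕜] E, ∀ x, ‖U x - V (e x)‖ ≤ √(2 - 2 * σ) * ‖x‖ := by
  obtain ⟨e, he⟩ := exists_linearIsometryEquiv_mul_norm_sq_le_re_inner h hσ
  refine ⟨e, fun x ↦ ?_⟩
  have hsq : ‖U x - V (e x)‖ ^ 2 ≤ (2 - 2 * σ) * ‖x‖ ^ 2 := by
    rw [norm_sub_sq (𝕜 := 𝕜), hT, U.norm_map, V.norm_map, e.norm_map]
    linarith [he x]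
  rw [← Real.sqrt_sq (norm_nonneg x), ← Real.sqrt_mul' _ (sq_nonneg _)]
  exact Real.le_sqrt_of_sq_le hsq

end InnerProductSpace

section Matrix

variable {𝕜 m n p : Type*} [RCLike 𝕜] [Fintype m] [Fintype n] [Fintype p]
  [DecidableEq n] [DecidableEq p]

theorem inner_toEuclideanLin_toEuclideanLin (A : Matrix m n 𝕜) (C : Matrix m p 𝕜)
    (x : EuclideanSpace 𝕜 n) (y : EuclideanSpace 𝕜 p) :
    ⟪toEuclideanLin A x, toEuclideanLin C y⟫_𝕜 = ⟪x, toEuclideanLin (Aᴴ * C) y⟫_𝕜 := by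
  classical
  rw [toLpLin_mul 2 2 2, LinearMap.comp_apply, toEuclideanLin_conjTranspose_eq_adjoint,
    LinearMap.adjoint_inner_right]

theorem conjTranspose_mul_self_eq_one_iff {A : Matrix m n 𝕜} :
    Aᴴ * A = 1 ↔ ∀ x, ‖toEuclideanLin A x‖ = ‖x‖ := by
  rw [LinearMap.norm_map_iff_inner_map_map]
  simp only [inner_toEuclideanLin_toEuclideanLin]
  constructor
  · intro h x y
    simp [h]
  · intro h
    refine toEuclideanLin.injective (LinearMap.ext fun y ↦ ext_inner_left 𝕜 fun x ↦ ?_)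
    simp [h]

theorem sminNorm_mul_norm_le {k : ℕ} (M : Matrix (Fin k) (Fin k) ℝ)
    (x : EuclideanSpace ℝ (Fin k)) : sminNorm M * ‖x‖ ≤ ‖toEuclideanLin M x‖ := by
  rcases eq_or_ne x 0 with rfl | hx
  · simp
  rw [← le_div_iff₀ (norm_pos_iff.2 hx)]
  refine csInf_le ⟨0, ?_⟩ ⟨‖x‖⁻¹ • x, norm_smul_inv_norm hx, ?_⟩
  · rintro _ ⟨y, -, rfl⟩
    positivity
  · simp [norm_smul, div_eq_inv_mul]

theorem exists_orthogonal_specNorm_sub_mul_le {k : ℕ} {U V : Matrix m (Fin k) ℝ}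
    (hU : Uᵀ * U = 1) (hV : Vᵀ * V = 1) :
    ∃ Q : Matrix (Fin k) (Fin k) ℝ, Qᵀ * Q = 1 ∧
      specNorm (U - V * Q) ≤ √(2 - 2 * sminNorm (Uᵀ * V)) := by
  simp only [← conjTranspose_eq_transpose_of_trivial] at hU hV ⊢
  obtain ⟨e, he⟩ := exists_linearIsometryEquiv_norm_sub_le rfl
    (U := ⟨toEuclideanLin U, conjTranspose_mul_self_eq_one_iff.1 hU⟩)
    (V := ⟨toEuclideanLin V, conjTranspose_mul_self_eq_one_iff.1 hV⟩)
    (inner_toEuclideanLin_toEuclideanLin U V) (sminNorm_mul_norm_le (Uᴴ * V))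
  obtain ⟨Q, hQ⟩ := toEuclideanLin.surjective e.toLinearMap
  have hQe (x) : toEuclideanLin Q x = e x := by rw [hQ]; rfl
  refine ⟨Q, conjTranspose_mul_self_eq_one_iff.2 fun x ↦ by rw [hQe, e.norm_map],
    ContinuousLinearMap.opNorm_le_bound _ (Real.sqrt_nonneg _) fun x ↦ ?_⟩
  simpa [toLpLin_mul 2 2 2, hQe] using he x

end Matrix

theorem dist_between_subspaces_min_rotation_general {m n : Type*} [Fintype m] [Fintype n] {k : ℕ}
    {B : Matrix n n ℝ} {S : Matrix m n ℝ} (hS : Sᵀ * S = B) {X Y : Matrix n (Fin k) ℝ}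
    (hX : Xᵀ * B * X = 1) (hY : Yᵀ * B * Y = 1) :
    ∃ Q : Matrix (Fin k) (Fin k) ℝ, Qᵀ * Q = 1 ∧
      specNorm (S * X - S * Y * Q) ≤ √(2 - 2 * sminNorm (Xᵀ * B * Y)) := by
  have hgram (Z W : Matrix n (Fin k) ℝ) : (S * Z)ᵀ * (S * W) = Zᵀ * B * W := by
    simp only [← hS, transpose_mul, Matrix.mul_assoc]
  rw [← hgram] at hX hY ⊢
  exact exists_orthogonal_specNorm_sub_mul_le hX hY

/-- **Lemma 1, second claim (distance between subspaces).**
Let `B` be real symmetric positive definite (`d×d`) with symmetric positive definite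
square root `S = B^{1/2}`, `1 ≤ k ≤ d`, and let `X, Y ∈ ℝ^{d×k}` be `B`-orthonormal
(`XᵀBX = YᵀBY = I`).  Then the minimum over orthogonal `k×k` matrices `Q` of the
spectral norm `‖B^{1/2}X − B^{1/2}YQ‖` is at most `√(2 − 2σ_min(XᵀBY))`. -/
theorem dist_between_subspaces_min_rotation
    {d k : ℕ} (hk1 : 1 ≤ k) (hkd : k ≤ d)
    (B S : Matrix (Fin d) (Fin d) ℝ) (hB : B.PosDef) (hBsym : B.IsSymm)
    (hS : S.PosDef) (hSsym : S.IsSymm) (hSsq : S * S = B)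
    (X Y : Matrix (Fin d) (Fin k) ℝ)
    (hX : Xᵀ * B * X = 1) (hY : Yᵀ * B * Y = 1) :
    ∃ Q : Matrix (Fin k) (Fin k) ℝ, Qᵀ * Q = 1 ∧
      specNorm (S * X - S * Y * Q) ≤
        Real.sqrt (2 - 2 * sminNorm (Xᵀ * B * Y)) :=
  dist_between_subspaces_min_rotation_general (by rwa [hSsym.eq]) hX hY
end
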